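/- arXiv:2012.13515 — 2 statements merged into one kernel-verified Lean document; each statement's English description precedes it below -/
import Mathlib

section
/- Let E ⊆ ℝ^d be compact, ε > 0, x ∈ ∂E_ε, and let (x_n) be a sequence in ℝ^d with x_n → x, x_n ≠ x for all n, and (x_n − x)/‖x_n − x‖ → v for some unit vector v. Then: (i) if ⟨y − x, v⟩ > 0 for some contributor y ∈ Π_E(x), then there is N such that x_n lies in the open ball B_ε(y) for all n ≥ N; (ii) if ⟨y − x, v⟩ < 0 for every y ∈ Π_E(x), then there is N such that x_n ∉ E_ε for all n ≥ N. -/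
open Metric Set Filter Topology RealInnerProductSpace

noncomputable section

/-- The closed ε-neighbourhood of a set `E`. -/
def eNbhd {d : ℕ} (E : Set (EuclideanSpace ℝ (Fin d))) (ε : ℝ) :
    Set (EuclideanSpace ℝ (Fin d)) :=
  closure (⋃ y ∈ E, ball y ε)

/-- The set of contributors of a boundary point `x`: points of `∂E` at distance exactly `ε`. -/
def contributors {d : ℕ} (E : Set (EuclideanSpace ℝ (Fin d))) (ε : ℝ)
    (x : EuclideanSpace ℝ (Fin d)) : Set (EuclideanSpace ℝ (Fin d)) :=
  {y ∈ frontier E | ‖y - x‖ = ε}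

/-!
Moving from `x` to `z` changes the squared distance to `y` by `t * (t - 2 * ⟪y - x, w⟫)`, where
`t = ‖z - x‖` and `w` is the unit vector from `x` towards `z`. As `z → x` and `w → v`, the sign of
this change is opposite to that of `⟪y - x, v⟫`, and it persists for points near `y`. For a
contributor this settles the first claim. For the second one, `x` is at distance at least `ε` from
every point of `E`, and the points of `E` at distance exactly `ε` are contributors; so every point
of `E` has a neighbourhood in which all points of `E` are eventually at distance more than `ε`
from `z`, and compactness makes this uniform.
-/

section PseudoMetricSpace

variable {X : Type*} [PseudoMetricSpace X] {E : Set X} {ε r : ℝ} {x y z : X}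

lemma notMem_thickening_of_mem_frontier_closure (hx : x ∈ frontier (closure (thickening ε E))) :
    x ∉ thickening ε E :=
  fun h ↦ hx.2 (isOpen_thickening.subset_interior_iff.mpr subset_closure h)

lemma le_dist_of_notMem_thickening (hx : x ∉ thickening ε E) (hy : y ∈ E) : ε ≤ dist x y :=
  not_lt.mp fun h ↦ hx (mem_thickening_iff.mpr ⟨y, hy, h⟩)

lemma thickening_inter_ball_subset :
    thickening ε E ∩ ball x (r - ε) ⊆ thickening ε (E ∩ closedBall x r) := by
  rintro z ⟨hzE, hzx⟩
  obtain ⟨y, hyE, hzy⟩ := mem_thickening_iff.mp hzE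
  rw [mem_ball] at hzx
  have hyx : dist y x ≤ r := by linarith [dist_triangle_left y x z]
  exact mem_thickening_iff.mpr ⟨y, ⟨hyE, hyx⟩, hzy⟩

lemma exists_dist_le_of_mem_closure_thickening (hε : 0 ≤ ε)
    (hE : IsCompact (E ∩ closedBall x r)) (hzx : z ∈ ball x (r - ε))
    (hz : z ∈ closure (thickening ε E)) : ∃ y ∈ E ∩ closedBall x r, dist z y ≤ ε := by
  have hzloc : z ∈ closure (thickening ε (E ∩ closedBall x r)) :=
    closure_mono thickening_inter_ball_subset (isOpen_ball.closure_inter ⟨hz, hzx⟩)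
  have hzcth := closure_thickening_subset_cthickening _ _ hzloc
  simpa only [hE.cthickening_eq_biUnion_closedBall hε, mem_iUnion₂, exists_prop, mem_closedBall]
    using hzcth

end PseudoMetricSpace

section NormedSpace

variable {F : Type*} [NormedAddCommGroup F] [NormedSpace ℝ F] {E : Set F} {ε : ℝ} {x y v : F}

lemma mem_frontier_of_mem_sphere_of_notMem_thickening (hε : ε ≠ 0) (hx : x ∉ thickening ε E)
    (hyE : y ∈ E) (hy : y ∈ sphere x ε) : y ∈ frontier E := by
  have hball : ball x ε ⊆ Eᶜ := fun z hz hzE ↦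
    (le_dist_of_notMem_thickening hx hzE).not_gt (mem_ball'.mp hz)
  have hy' : y ∈ closure (ball x ε) := by
    rw [closure_ball x hε]
    exact sphere_subset_closedBall hy
  rw [frontier_eq_closure_inter_closure]
  exact ⟨subset_closure hyE, closure_mono hball hy'⟩

/-- The filter of neighbourhoods of `x` in the direction `v`: a map `u` tends to it along `l` if
and only if `u` tends to `x`, eventually avoids `x`, and the unit vectors pointing from `x` to
`u i` tend to `v`. -/
def directionalNhds (x v : F) : Filter F :=
  𝓝[≠] x ⊓ comap (fun z ↦ NormedSpace.normalize (z - x)) (𝓝 v)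

lemma directionalNhds_le_nhds : directionalNhds x v ≤ 𝓝 x :=
  inf_le_left.trans nhdsWithin_le_nhds

lemma eventually_ne_directionalNhds : ∀ᶠ z in directionalNhds x v, z ≠ x :=
  eventually_mem_nhdsWithin.filter_mono inf_le_left

lemma tendsto_normalize_directionalNhds :
    Tendsto (fun z ↦ NormedSpace.normalize (z - x)) (directionalNhds x v) (𝓝 v) :=
  tendsto_comap.mono_left inf_le_right

lemma tendsto_directionalNhds_iff {ι : Type*} {l : Filter ι} {u : ι → F} :
    Tendsto u l (directionalNhds x v) ↔ Tendsto u l (𝓝 x) ∧ (∀ᶠ i in l, u i ≠ x) ∧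
      Tendsto (fun i ↦ NormedSpace.normalize (u i - x)) l (𝓝 v) := by
  simp only [directionalNhds, tendsto_inf, tendsto_nhdsWithin_iff, tendsto_comap_iff, and_assoc,
    mem_compl_iff, mem_singleton_iff, Function.comp_def]

end NormedSpace

section InnerProductSpace

variable {F : Type*} [NormedAddCommGroup F] [InnerProductSpace ℝ F] {E : Set F} {ε r : ℝ}
  {x y v : F}

lemma dist_sq_sub_dist_sq (x y z : F) :
    dist z y ^ 2 - dist x y ^ 2 =
      ‖z - x‖ * (‖z - x‖ - 2 * ⟪y - x, NormedSpace.normalize (z - x)⟫) := by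
  have hinner : ⟪y - x, z - x⟫ = ‖z - x‖ * ⟪y - x, NormedSpace.normalize (z - x)⟫ := by
    rw [← inner_smul_right, NormedSpace.norm_smul_normalize]
  rw [dist_eq_norm', dist_eq_norm', ← sub_sub_sub_cancel_right y z x, norm_sub_sq_real, hinner]
  ring

lemma tendsto_norm_sub_sub_two_mul_inner (x y v : F) :
    Tendsto (fun p : F × F ↦ ‖p.1 - x‖ - 2 * ⟪p.2 - x, NormedSpace.normalize (p.1 - x)⟫)
      (directionalNhds x v ×ˢ 𝓝 y) (𝓝 (-(2 * ⟪y - x, v⟫))) := by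
  have hnorm : Tendsto (fun z ↦ ‖z - x‖) (directionalNhds x v) (𝓝 0) :=
    (tendsto_norm_sub_self x).mono_left directionalNhds_le_nhds
  have hinner : Tendsto (fun p : F × F ↦ ⟪p.2 - x, NormedSpace.normalize (p.1 - x)⟫)
      (directionalNhds x v ×ˢ 𝓝 y) (𝓝 ⟪y - x, v⟫) :=
    (tendsto_snd.sub_const x).inner (tendsto_normalize_directionalNhds.comp tendsto_fst)
  simpa only [zero_sub, Function.comp_apply] using (hnorm.comp tendsto_fst).sub (hinner.const_mul 2)

lemma eventually_dist_lt_of_inner_pos (hv : 0 < ⟪y - x, v⟫) :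
    ∀ᶠ p in directionalNhds x v ×ˢ 𝓝 y, dist p.1 p.2 < dist x p.2 := by
  filter_upwards [(tendsto_norm_sub_sub_two_mul_inner x y v).eventually_lt_const
    (by linarith : -(2 * ⟪y - x, v⟫) < 0), tendsto_fst.eventually eventually_ne_directionalNhds]
    with p hp hne
  refine lt_of_pow_lt_pow_left₀ 2 dist_nonneg (sub_neg.mp ?_)
  rw [dist_sq_sub_dist_sq]
  exact mul_neg_of_pos_of_neg (norm_sub_pos_iff.mpr hne) hp

lemma eventually_lt_dist_of_inner_neg (hv : ⟪y - x, v⟫ < 0) :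
    ∀ᶠ p in directionalNhds x v ×ˢ 𝓝 y, dist x p.2 < dist p.1 p.2 := by
  filter_upwards [(tendsto_norm_sub_sub_two_mul_inner x y v).eventually_const_lt
    (by linarith : 0 < -(2 * ⟪y - x, v⟫)), tendsto_fst.eventually eventually_ne_directionalNhds]
    with p hp hne
  refine lt_of_pow_lt_pow_left₀ 2 dist_nonneg (sub_pos.mp ?_)
  rw [dist_sq_sub_dist_sq]
  exact mul_pos (norm_sub_pos_iff.mpr hne) hp

lemma eventually_lt_dist_of_notMem_thickening (hx : x ∉ thickening ε E) (hyE : y ∈ E)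
    (hv : dist x y = ε → ⟪y - x, v⟫ < 0) :
    ∀ᶠ p in directionalNhds x v ×ˢ 𝓝 y, p.2 ∈ E → ε < dist p.1 p.2 := by
  rcases (le_dist_of_notMem_thickening hx hyE).eq_or_lt' with heq | hlt
  · filter_upwards [eventually_lt_dist_of_inner_neg (hv heq)] with p hp hpE
    exact (le_dist_of_notMem_thickening hx hpE).trans_lt hp
  · have hdist : Tendsto (fun p : F × F ↦ dist p.1 p.2) (directionalNhds x v ×ˢ 𝓝 y)
        (𝓝 (dist x y)) :=
      (tendsto_fst.mono_right directionalNhds_le_nhds).dist tendsto_snd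
    exact (hdist.eventually_const_lt hlt).mono fun _ hp _ ↦ hp

lemma eventually_forall_lt_dist (hE : IsCompact E) (hx : x ∉ thickening ε E)
    (hv : ∀ y ∈ E ∩ sphere x ε, ⟪y - x, v⟫ < 0) :
    ∀ᶠ z in directionalNhds x v, ∀ y ∈ E, ε < dist z y := by
  have hnhdsSet : ∀ᶠ p in directionalNhds x v ×ˢ 𝓝ˢ E, p.2 ∈ E → ε < dist p.1 p.2 :=
    hE.mem_prod_nhdsSet_of_forall fun y hy ↦
      eventually_lt_dist_of_notMem_thickening hx hy fun hxy ↦ hv y ⟨hy, mem_sphere'.mpr hxy⟩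
  have hprincipal := hnhdsSet.filter_mono (prod_mono_right _ principal_le_nhdsSet)
  filter_upwards [eventually_prod_principal_iff.mp hprincipal] with z hz y hy
  exact hz y hy hy

lemma eventually_notMem_closure_thickening (hε : 0 ≤ ε) (hr : ε < r)
    (hE : IsCompact (E ∩ closedBall x r)) (hx : x ∉ thickening ε E)
    (hv : ∀ y ∈ E ∩ sphere x ε, ⟪y - x, v⟫ < 0) :
    ∀ᶠ z in directionalNhds x v, z ∉ closure (thickening ε E) := by
  have hfar : ∀ᶠ z in directionalNhds x v, ∀ y ∈ E ∩ closedBall x r, ε < dist z y :=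
    eventually_forall_lt_dist hE (fun h ↦ hx (thickening_subset_of_subset ε inter_subset_left h))
      fun y hy ↦ hv y ⟨hy.1.1, hy.2⟩
  have hnear : ∀ᶠ z in directionalNhds x v, z ∈ ball x (r - ε) :=
    directionalNhds_le_nhds (ball_mem_nhds x (sub_pos.mpr hr))
  filter_upwards [hfar, hnear] with z hzfar hznear hz
  obtain ⟨y, hy, hzy⟩ := exists_dist_le_of_mem_closure_thickening hε hE hznear hz
  exact (hzfar y hy).not_ge hzy

theorem tails_of_directed_sequences_general {ι : Type*} {l : Filter ι} {u : ι → F} (hε : 0 < ε)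
    (hr : ε < r) (hE : IsCompact (E ∩ closedBall x r)) (hx : x ∉ thickening ε E)
    (hu : Tendsto u l (directionalNhds x v)) :
    (∀ y ∈ frontier E ∩ sphere x ε, 0 < ⟪y - x, v⟫ → ∀ᶠ i in l, u i ∈ ball y ε) ∧
    ((∀ y ∈ frontier E ∩ sphere x ε, ⟪y - x, v⟫ < 0) →
      ∀ᶠ i in l, u i ∉ closure (thickening ε E)) := by
  constructor
  · intro y hy hv
    filter_upwards [hu.eventually (eventually_dist_lt_of_inner_pos hv).curry] with i hi
    exact hi.self_of_nhds.trans_eq (mem_sphere'.mp hy.2)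
  · intro hv
    exact hu.eventually <| eventually_notMem_closure_thickening hε.le hr hE hx fun y hy ↦
      hv y ⟨mem_frontier_of_mem_sphere_of_notMem_thickening hε.ne' hx hy.1 hy.2, hy.2⟩

end InnerProductSpace

section Euclidean

variable {d : ℕ} (E : Set (EuclideanSpace ℝ (Fin d))) (ε : ℝ)

lemma eNbhd_eq_closure_thickening : eNbhd E ε = closure (thickening ε E) := by
  rw [eNbhd, thickening_eq_biUnion_ball]

lemma contributors_eq_frontier_inter_sphere (x : EuclideanSpace ℝ (Fin d)) :
    contributors E ε x = frontier E ∩ sphere x ε := by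
  simp only [contributors, ← dist_eq_norm]
  rfl

end Euclidean

/-- Tails of directed sequences: (i) if `⟨y - x, v⟩ > 0` for a contributor `y`, then the
tail of the sequence lies in the open ball `B_ε(y)`; (ii) if `⟨y - x, v⟩ < 0` for all
contributors, then the tail of the sequence lies outside `E_ε`. -/
theorem tails_of_directed_sequences {d : ℕ} (E : Set (EuclideanSpace ℝ (Fin d)))
    (hE : IsCompact E) {ε : ℝ} (hε : 0 < ε) (x : EuclideanSpace ℝ (Fin d))
    (hx : x ∈ frontier (eNbhd E ε)) (u : ℕ → EuclideanSpace ℝ (Fin d))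
    (hne : ∀ n, u n ≠ x) (hconv : Tendsto u atTop (nhds x))
    (v : EuclideanSpace ℝ (Fin d))
    (hdir : Tendsto (fun n => (‖u n - x‖)⁻¹ • (u n - x)) atTop (nhds v)) :
    (∀ y ∈ contributors E ε x, 0 < ⟪y - x, v⟫ →
      ∃ N, ∀ n ≥ N, u n ∈ ball y ε) ∧
    ((∀ y ∈ contributors E ε x, ⟪y - x, v⟫ < 0) →
      ∃ N, ∀ n ≥ N, u n ∉ eNbhd E ε) := by
  rw [eNbhd_eq_closure_thickening] at hx ⊢
  rw [contributors_eq_frontier_inter_sphere]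
  simp only [← eventually_atTop]
  exact tails_of_directed_sequences_general hε (lt_add_one ε) (hE.inter_right isClosed_closedBall)
    (notMem_thickening_of_mem_frontier_closure hx)
    (tendsto_directionalNhds_iff.mpr ⟨hconv, .of_forall hne, hdir⟩)

end
end

section
/- Let E ⊆ ℝ^d be compact, ε > 0, x ∈ ∂E_ε, and let ξ be a unit vector. Then: (i) if ξ ∈ Ξ_x(E_ε), then ⟨y − x, ξ⟩ ≤ 0 for every contributor y ∈ Π_E(x); (ii) if ⟨y − x, ξ⟩ < 0 for every y ∈ Π_E(x), then ξ ∈ Ξ_x(E_ε). -/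
open Metric Set Filter Topology RealInnerProductSpace

noncomputable section

/-- The set of outward directions from `E_ε` at `x`. -/
def outwardDirs {d : ℕ} (E : Set (EuclideanSpace ℝ (Fin d))) (ε : ℝ)
    (x : EuclideanSpace ℝ (Fin d)) : Set (EuclideanSpace ℝ (Fin d)) :=
  {ξ | ‖ξ‖ = 1 ∧ ∃ u : ℕ → EuclideanSpace ℝ (Fin d), (∀ n, u n ∉ eNbhd E ε) ∧
    Tendsto u atTop (nhds x) ∧
    Tendsto (fun n => (‖u n - x‖)⁻¹ • (u n - x)) atTop (nhds ξ)}

/-!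
Near `x`, whether a point `z` lies within `ε` of some `y` with `dist x y = ε` is governed, to first
order in `z - x`, by the sign of `⟪y - x, z - x⟫`, as the law of cosines shows.

(i) A point outside `E_ε` is farther from each contributor `y` than `x` is, so
`2⟪y - x, z - x⟫ ≤ ‖z - x‖ ^ 2`; divide by `‖z - x‖` and let `z → x`.

(ii) Split the closure of `E` according to the sign of `⟪y - x, ξ⟫`. Moving from `x` along `ξ`
increases the distance to each point of the negative part, which was at least `ε` at the start. The
nonnegative part contains no contributor, hence has distance greater than `ε` from `x`, and this
persists for short times.
-/

section Topology

variable {X : Type*} [TopologicalSpace X] {s t : Set X}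

lemma closure_inter_closure_subset_frontier_of_disjoint (h : Disjoint s t) :
    closure s ∩ closure t ⊆ frontier t := fun _ hx =>
  ⟨hx.2, disjoint_left.1 ((h.mono_right interior_subset).closure_left isOpen_interior) hx.1⟩

end Topology

section Metric

variable {X : Type*} [PseudoMetricSpace X] {E : Set X} {x y : X} {ε : ℝ}

lemma disjoint_ball_of_notMem_interior_cthickening (hx : x ∉ interior (cthickening ε E)) :
    Disjoint (ball x ε) E :=
  disjoint_right.2 fun y hyE hyx =>
    hx <| thickening_subset_interior_cthickening ε E <|
      mem_thickening_iff.2 ⟨y, hyE, mem_ball'.1 hyx⟩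

lemma lt_dist_of_notMem_cthickening (hx : x ∉ cthickening ε E) (hy : y ∈ closure E) :
    ε < dist x y := by
  rw [← cthickening_closure] at hx
  exact not_le.1 fun hxy => hx (mem_cthickening_of_dist_le x y ε _ hy hxy)

lemma notMem_cthickening_iff_forall_lt_dist [ProperSpace X] (hε : 0 ≤ ε) :
    x ∉ cthickening ε E ↔ ∀ y ∈ closure E, ε < dist x y := by
  simp only [cthickening_eq_biUnion_closedBall E hε, mem_iUnion, mem_closedBall, exists_prop,
    not_exists, not_and, not_le]

end Metric

section InnerProductSpace

variable {V : Type*} [SeminormedAddCommGroup V] [InnerProductSpace ℝ V] {E : Set V}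
  {x y z ξ : V} {ε : ℝ}

lemma dist_sq_eq_dist_sq_sub_inner_add (x y z : V) :
    dist z y ^ 2 = dist x y ^ 2 - 2 * ⟪y - x, z - x⟫ + ‖z - x‖ ^ 2 := by
  rw [dist_comm z, dist_comm x, dist_eq_norm, dist_eq_norm, ← norm_sub_sq_real,
    sub_sub_sub_cancel_right]

lemma inner_inv_norm_smul_le_of_dist_le (h : dist x y ≤ dist z y) :
    ⟪y - x, ‖z - x‖⁻¹ • (z - x)⟫ ≤ ‖z - x‖ / 2 := by
  have hsq : dist x y ^ 2 ≤ dist z y ^ 2 := by gcongr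
  have hinner : ⟪y - x, z - x⟫ ≤ ‖z - x‖ * (‖z - x‖ / 2) := by
    linarith [dist_sq_eq_dist_sq_sub_inner_add x y z]
  rw [real_inner_smul_right]
  exact inv_mul_le_of_le_mul₀ (norm_nonneg _) (by positivity) hinner

lemma inner_nonpos_of_tendsto_direction {ι : Type*} {l : Filter ι} [l.NeBot] {u : ι → V}
    (hfar : ∀ᶠ i in l, dist x y ≤ dist (u i) y) (hu : Tendsto u l (𝓝 x))
    (hdir : Tendsto (fun i => ‖u i - x‖⁻¹ • (u i - x)) l (𝓝 ξ)) : ⟪y - x, ξ⟫ ≤ 0 := by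
  have hinner : Tendsto (fun i => ⟪y - x, ‖u i - x‖⁻¹ • (u i - x)⟫) l (𝓝 ⟪y - x, ξ⟫) :=
    tendsto_const_nhds.inner hdir
  have hbound : Tendsto (fun i => ‖u i - x‖ / 2) l (𝓝 0) := by
    simpa only [zero_div] using (tendsto_iff_norm_sub_tendsto_zero.1 hu).div_const 2
  exact le_of_tendsto_of_tendsto hinner hbound
    (hfar.mono fun _ => inner_inv_norm_smul_le_of_dist_le)

lemma dist_lt_dist_add_smul_of_inner_neg {t : ℝ} (ht : 0 < t) (h : ⟪y - x, ξ⟫ < 0) :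
    dist x y < dist (x + t • ξ) y := by
  have hcos := dist_sq_eq_dist_sq_sub_inner_add x y (x + t • ξ)
  rw [add_sub_cancel_left, real_inner_smul_right] at hcos
  refine lt_of_pow_lt_pow_left₀ 2 dist_nonneg ?_
  linarith [mul_neg_of_pos_of_neg ht h, sq_nonneg ‖t • ξ‖]

lemma eventually_add_smul_notMem_cthickening [ProperSpace V] (hε : 0 ≤ ε)
    (hball : Disjoint (ball x ε) E) (hneg : ∀ y ∈ closure E, dist x y = ε → ⟪y - x, ξ⟫ < 0) :
    ∀ᶠ t : ℝ in 𝓝[>] 0, x + t • ξ ∉ cthickening ε E := by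
  have hdist : ∀ y ∈ closure E, ε ≤ dist x y := fun y hy => not_lt.1 fun hxy =>
    disjoint_left.1 (hball.closure_right isOpen_ball) (mem_ball'.2 hxy) hy
  set K := closure E ∩ {y | 0 ≤ ⟪y - x, ξ⟫}
  have hKclosed : IsClosed K :=
    isClosed_closure.inter (isClosed_le continuous_const (by fun_prop))
  have hxK : x ∉ cthickening ε K := by
    rw [notMem_cthickening_iff_forall_lt_dist hε, hKclosed.closure_eq]
    exact fun y hy => (hdist y hy.1).lt_of_ne fun h => (hneg y hy.1 h.symm).not_ge hy.2
  have hray : Tendsto (fun t : ℝ => x + t • ξ) (𝓝[>] 0) (𝓝 x) :=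
    (Continuous.tendsto' (by fun_prop) 0 x (by simp)).mono_left nhdsWithin_le_nhds
  filter_upwards [hray.eventually (isClosed_cthickening.isOpen_compl.mem_nhds hxK),
    self_mem_nhdsWithin] with t htK ht
  refine (notMem_cthickening_iff_forall_lt_dist hε).2 fun y hy => ?_
  rcases lt_or_ge ⟪y - x, ξ⟫ 0 with hyneg | hynonneg
  · exact (hdist y hy).trans_lt (dist_lt_dist_add_smul_of_inner_neg ht hyneg)
  · exact lt_dist_of_notMem_cthickening htK (subset_closure ⟨hy, hynonneg⟩)

end InnerProductSpace

section OutwardDirections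

variable {d : ℕ} {E : Set (EuclideanSpace ℝ (Fin d))} {ε : ℝ} {x y ξ : EuclideanSpace ℝ (Fin d)}

lemma eNbhd_eq_cthickening (hε : 0 < ε) (E : Set (EuclideanSpace ℝ (Fin d))) :
    eNbhd E ε = cthickening ε E := by
  rw [eNbhd, ← thickening_eq_biUnion_ball, closure_thickening hε]

lemma mem_contributors_of_disjoint_ball (hε : 0 < ε) (hball : Disjoint (ball x ε) E)
    (hy : y ∈ closure E) (hxy : dist x y = ε) : y ∈ contributors E ε x := by
  refine ⟨closure_inter_closure_subset_frontier_of_disjoint hball ⟨?_, hy⟩,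
    by rw [← dist_eq_norm', hxy]⟩
  rw [closure_ball x hε.ne']
  exact mem_closedBall'.2 hxy.le

lemma inner_nonpos_of_mem_outwardDirs (hε : 0 < ε) (hξ : ξ ∈ outwardDirs E ε x)
    (hy : y ∈ contributors E ε x) : ⟪y - x, ξ⟫ ≤ 0 := by
  obtain ⟨-, u, hu, hux, hdir⟩ := hξ
  rw [eNbhd_eq_cthickening hε] at hu
  have hxy : dist x y = ε := by rw [dist_eq_norm', hy.2]
  refine inner_nonpos_of_tendsto_direction (.of_forall fun n => ?_) hux hdir
  exact hxy.trans_le (lt_dist_of_notMem_cthickening (hu n) (frontier_subset_closure hy.1)).le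

lemma mem_outwardDirs_of_frequently_ray (hξ : ‖ξ‖ = 1)
    (hray : ∃ᶠ t : ℝ in 𝓝[>] 0, x + t • ξ ∉ eNbhd E ε) : ξ ∈ outwardDirs E ε x := by
  obtain ⟨t, ht, hout⟩ :=
    exists_seq_forall_of_frequently (hray.and_eventually self_mem_nhdsWithin)
  refine ⟨hξ, fun n => x + t n • ξ, fun n => (hout n).1, ?_, ?_⟩
  · simpa only [zero_smul, add_zero] using
      ((tendsto_nhds_of_tendsto_nhdsWithin ht).smul_const ξ).const_add x
  · refine tendsto_const_nhds.congr fun n => ?_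
    have htn : 0 < t n := (hout n).2
    rw [add_sub_cancel_left, norm_smul, hξ, mul_one, Real.norm_of_nonneg htn.le,
      inv_smul_smul₀ htn.ne']

lemma mem_outwardDirs_of_inner_neg (hε : 0 < ε) (hx : x ∉ interior (eNbhd E ε)) (hξ : ‖ξ‖ = 1)
    (hneg : ∀ y ∈ contributors E ε x, ⟪y - x, ξ⟫ < 0) : ξ ∈ outwardDirs E ε x := by
  rw [eNbhd_eq_cthickening hε] at hx
  have hball := disjoint_ball_of_notMem_interior_cthickening hx
  apply mem_outwardDirs_of_frequently_ray hξ
  rw [eNbhd_eq_cthickening hε]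
  exact (eventually_add_smul_notMem_cthickening hε.le hball fun y hy hxy =>
    hneg y (mem_contributors_of_disjoint_ball hε hball hy hxy)).frequently

theorem outwardDirs_orientation_general (hε : 0 < ε) (hx : x ∈ frontier (eNbhd E ε))
    (hξ : ‖ξ‖ = 1) :
    (ξ ∈ outwardDirs E ε x → ∀ y ∈ contributors E ε x, ⟪y - x, ξ⟫ ≤ 0) ∧
    ((∀ y ∈ contributors E ε x, ⟪y - x, ξ⟫ < 0) → ξ ∈ outwardDirs E ε x) :=
  ⟨fun hout _ => inner_nonpos_of_mem_outwardDirs hε hout,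
    mem_outwardDirs_of_inner_neg hε hx.2 hξ⟩

end OutwardDirections

/-- Orientation of outward directions relative to contributors:
(i) outward directions form a nonpositive inner product with `y - x` for every contributor `y`;
(ii) a unit vector with strictly negative inner product with `y - x` for every contributor `y`
is an outward direction. -/
theorem outwardDirs_orientation {d : ℕ} (E : Set (EuclideanSpace ℝ (Fin d)))
    (hE : IsCompact E) {ε : ℝ} (hε : 0 < ε) (x : EuclideanSpace ℝ (Fin d))
    (hx : x ∈ frontier (eNbhd E ε)) (ξ : EuclideanSpace ℝ (Fin d)) (hξ : ‖ξ‖ = 1) :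
    (ξ ∈ outwardDirs E ε x → ∀ y ∈ contributors E ε x, ⟪y - x, ξ⟫ ≤ 0) ∧
    ((∀ y ∈ contributors E ε x, ⟪y - x, ξ⟫ < 0) → ξ ∈ outwardDirs E ε x) :=
  outwardDirs_orientation_general hε hx hξ

end
end
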